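/- L² error bound: let n ≥ 2, let 0 < r₁ < … < r_n, set h := max_{1≤j≤n−1}(r_{j+1} − r_j), let f ∈ Λ₀, set α := f(0) and ν_j := f(r_j) for 1 ≤ j ≤ n, and let σ be either the interpolant σ^A (with σ(r_j) = ν_j for all j and σ(0) = α) or σ^B (non-singular, with σ(r_j) = ν_j for all j). Then for l ∈ {0,1}: ( ∫_{r₁}^{r_n} |f^{(l)}(r) − σ^{(l)}(r)|² dr )^{1/2} ≤ (1/(2^{1−l}·√r₁))·h^{2−l}·‖f‖₀. -/

import Mathlib

open MeasureTheory Set Filter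

noncomputable section

/-- The radial Beppo Levi energy space `Λ₀`: functions `f : (0,∞) → ℂ` of class `C¹`
whose derivative `f′` is locally absolutely continuous on compact subintervals of `(0,∞)`
(encoded by the fundamental theorem of calculus with an integrable density `f″`),
and whose radial Beppo Levi energy `∫₀^∞ ( r·|f″(r)|² + (1/r)·|f′(r)|² ) dr` is finite. -/
structure Lambda0 where
  f : ℝ → ℂ
  f' : ℝ → ℂ
  f'' : ℝ → ℂ
  hasDeriv : ∀ r ∈ Set.Ioi (0:ℝ), HasDerivAt f (f' r) r
  contDeriv : ContinuousOn f' (Set.Ioi 0)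
  locAC : ∀ a b : ℝ, 0 < a → a ≤ b →
    MeasureTheory.IntegrableOn f'' (Set.Icc a b) ∧
      ∀ x ∈ Set.Icc a b, f' x = f' a + ∫ t in a..x, f'' t
  energyFin : MeasureTheory.IntegrableOn
    (fun r : ℝ => r * ‖f'' r‖ ^ 2 + (1 / r) * ‖f' r‖ ^ 2) (Set.Ioi 0)

/-- The squared radial Beppo Levi energy `‖·‖₀²` of a function with first derivative `g'`
and second derivative `g''`. -/
def energySq (g' g'' : ℝ → ℂ) : ℝ :=
  ∫ r in Set.Ioi (0:ℝ), (r * ‖g'' r‖ ^ 2 + (1 / r) * ‖g' r‖ ^ 2)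

/-- The seminorm `‖f‖₀`. -/
def Lambda0.seminorm0 (F : Lambda0) : ℝ :=
  Real.sqrt (energySq F.f' F.f'')

/-- The semi-inner product `⟨f,g⟩₀`. -/
def innerBL (F G : Lambda0) : ℂ :=
  ∫ r in Set.Ioi (0:ℝ),
    ((r : ℂ) * F.f'' r * (starRingEnd ℂ) (G.f'' r) +
      (1 / (r : ℂ)) * F.f' r * (starRingEnd ℂ) (G.f' r))

/-- A Beppo Levi `L₀`-spline on the positive knots `r 1 < r 2 < … < r n`:
piecewise of the form `a·x² + b·x²·ln x + c + d·ln x` between consecutive knots,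
of the form `a·x² + b·x²·ln x + c` on `(0, r 1)`, of the form `c + d·ln x` on `(r n, ∞)`,
`C²` throughout `(0,∞)`, and continuously extended at `0`. -/
structure IsBLSpline (n : ℕ) (r : ℕ → ℝ) (η : ℝ → ℂ) : Prop where
  pieces : ∀ j : ℕ, 1 ≤ j → j + 1 ≤ n → ∃ a b c d : ℂ,
    ∀ x ∈ Set.Ioo (r j) (r (j + 1)),
      η x = a * (x : ℂ) ^ 2 + b * (x : ℂ) ^ 2 * (Real.log x : ℂ) + c + d * (Real.log x : ℂ)
  left : ∃ a b c : ℂ, ∀ x ∈ Set.Ioo (0 : ℝ) (r 1),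
      η x = a * (x : ℂ) ^ 2 + b * (x : ℂ) ^ 2 * (Real.log x : ℂ) + c
  right : ∃ c d : ℂ, ∀ x ∈ Set.Ioi (r n), η x = c + d * (Real.log x : ℂ)
  smooth : ContDiffOn ℝ 2 η (Set.Ioi 0)
  cont0 : ContinuousWithinAt η (Set.Ici 0) 0

/-- A Beppo Levi `L₀`-spline is non-singular if on `(0, r₁)` it has the form `a·x² + c`. -/
def NonSingularBLS (r1 : ℝ) (η : ℝ → ℂ) : Prop :=
  ∃ a c : ℂ, ∀ x ∈ Set.Ioo (0 : ℝ) r1, η x = a * (x : ℂ) ^ 2 + c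

/-- Rabut's kernel `K`. -/
def Kfun (r t : ℝ) : ℝ :=
  if r ≤ t then 0 else (1 / 4) * (t ^ 2 - r ^ 2 + (r ^ 2 + t ^ 2) * Real.log (r / t))

/-- The limiting kernel `H_{0,∞}` (with left endpoint knot `r1`). -/
def Hfun (r1 r t : ℝ) : ℝ :=
  Kfun r t - Kfun r r1 - Kfun r1 t + (1 / 4) * (r ^ 2 - r1 ^ 2) * Real.log (t / r1)

/-- The basis function `φ₀`. -/
def phi0 (r : ℝ) : ℝ :=
  if r ≤ 1 then r ^ 2 - r ^ 2 * Real.log r else 1 + Real.log r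

/-- Johnson's compactly supported profile `η₂`. -/
def eta2 (x : ℝ) : ℂ :=
  (((4 / 3 : ℝ) * (Real.log 2 - phi0 x + phi0 (x / 2)) : ℝ) : ℂ)

/-- The non-singular compactly supported profile `β`. -/
def betaFn (x : ℝ) : ℂ :=
  (((1 / 5 : ℝ) * (27 * Real.log 3 - 32 * Real.log 2 + 5 * phi0 x
      - 32 * phi0 (x / 2) + 27 * phi0 (x / 3)) : ℝ) : ℂ)

/-- `Ker L₀ = span{r², r² ln r, 1, ln r}`, as functions on `(0,∞)`. -/
def KerL0 : Set (ℝ → ℂ) :=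
  {η | ∃ a b c d : ℂ, ∀ x : ℝ, 0 < x →
    η x = a * (x : ℂ) ^ 2 + b * (x : ℂ) ^ 2 * (Real.log x : ℂ) + c + d * (Real.log x : ℂ)}

/-- `α(h) = inf_{η ∈ Ker L₀} sup_{t ∈ [0,1]} |t^μ − η(1+th)|`. -/
def alphaFn (μ h : ℝ) : ℝ :=
  sInf {v : ℝ | ∃ η ∈ KerL0,
    v = sSup ((fun t : ℝ => ‖((t ^ μ : ℝ) : ℂ) - η (1 + t * h)‖) '' Set.Icc (0 : ℝ) 1)}

/-!
Write `⟨·, ·⟩₀` for the semi-inner product of the energy and put `g = f - σ`, which vanishes at the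
knots. On each piece the equation `L₀ σ = 0` integrates once to `(x σ″)′ = σ′ / x + β`, so the
integrand of `⟨g, σ⟩₀` is almost everywhere the derivative of `Φ - β̄ g` with `Φ = x σ̄″ g′`. Since
`σ` is `C²`, the contributions of `Φ` telescope and only its limits at `0` and `∞` remain. These are
zero: by finiteness of the energies `Φ(x) / x` is integrable, whereas `1 / x` is not, neither at `0`
nor at `∞`. Hence `⟨g, σ⟩₀ = 0` and `‖g‖₀ ≤ ‖f‖₀`.

On a knot interval of length at most `h`, `g′` has mean zero and `g` vanishes at both ends, whence
`‖g′‖ ≤ h ‖g″‖` and `‖g‖ ≤ (h / 2) ‖g′‖` in `L²`. Summing over the intervals and using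
`r₁ |g″|² ≤ x |g″|²` on `[r₁, r_n]` gives the bounds.
-/

open scoped ComplexConjugate Interval Topology

section Primitive

variable {E : Type*} [NormedAddCommGroup E] [NormedSpace ℝ E] {u k : ℝ → E} {a b : ℝ}

theorem absolutelyContinuousOnInterval_of_dist_le {X Y : Type*} [PseudoMetricSpace X]
    [PseudoMetricSpace Y] {f : ℝ → X} {g : ℝ → Y} (hg : AbsolutelyContinuousOnInterval g a b)
    (hfg : ∀ x ∈ [[a, b]], ∀ y ∈ [[a, b]], dist (f x) (f y) ≤ dist (g x) (g y)) :
    AbsolutelyContinuousOnInterval f a b := by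
  refine squeeze_zero' (.of_forall fun _ ↦ Finset.sum_nonneg fun _ _ ↦ dist_nonneg) ?_ hg
  filter_upwards [mem_inf_of_right (mem_principal_self _)] with I hI
  exact Finset.sum_le_sum fun i hi ↦ hfg _ (hI.1 i hi).1 _ (hI.1 i hi).2

/-- `u` is an indefinite integral of `k` on `[[a, b]]`. This covers both a `C¹` function with its
derivative and an absolutely continuous one, where `k` is the derivative only almost everywhere. -/
structure IsPrimitiveOn (u k : ℝ → E) (a b : ℝ) : Prop where
  intervalIntegrable : IntervalIntegrable k volume a b
  sub_eq_integral : ∀ x ∈ [[a, b]], ∀ y ∈ [[a, b]], u y - u x = ∫ t in x..y, k t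

theorem IsPrimitiveOn.absolutelyContinuousOnInterval (hu : IsPrimitiveOn u k a b) :
    AbsolutelyContinuousOnInterval u a b := by
  have hk := hu.intervalIntegrable.norm
  refine absolutelyContinuousOnInterval_of_dist_le
    (hk.absolutelyContinuousOnInterval_intervalIntegral left_mem_uIcc) fun x hx y hy ↦ ?_
  have hx' := hk.mono_set (uIcc_subset_uIcc left_mem_uIcc hx)
  have hy' := hk.mono_set (uIcc_subset_uIcc left_mem_uIcc hy)
  rw [dist_comm, dist_comm (∫ _ in a..x, _), dist_eq_norm, hu.sub_eq_integral x hx y hy,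
    Real.dist_eq, intervalIntegral.integral_interval_sub_left hy' hx']
  exact intervalIntegral.norm_integral_le_abs_integral_norm

theorem IsPrimitiveOn.continuousOn (hu : IsPrimitiveOn u k a b) : ContinuousOn u [[a, b]] :=
  hu.absolutelyContinuousOnInterval.continuousOn

variable [CompleteSpace E]

theorem IsPrimitiveOn.ae_hasDerivAt (hu : IsPrimitiveOn u k a b) :
    ∀ᵐ x, x ∈ Ioo a b → HasDerivAt u (k x) x := by
  filter_upwards [hu.intervalIntegrable.ae_hasDerivAt_integral] with x hx hxab
  have hIoo : Ioo a b ⊆ [[a, b]] := Ioo_subset_Icc_self.trans Icc_subset_uIcc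
  refine ((hx (hIoo hxab) a left_mem_uIcc).const_add (u a)).congr_of_eventuallyEq ?_
  filter_upwards [Ioo_mem_nhds hxab.1 hxab.2] with y hy
  rw [← hu.sub_eq_integral a left_mem_uIcc y (hIoo hy), add_sub_cancel]

theorem isPrimitiveOn_of_hasDerivAt (hab : a ≤ b) (hu : ContinuousOn u (Icc a b))
    (hderiv : ∀ x ∈ Ioo a b, HasDerivAt u (k x) x) (hk : IntervalIntegrable k volume a b) :
    IsPrimitiveOn u k a b := by
  refine ⟨hk, fun x hx y hy ↦ ?_⟩
  have hsub : [[x, y]] ⊆ [[a, b]] := uIcc_subset_uIcc hx hy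
  rw [intervalIntegral.integral_eq_sub_of_hasDeriv_right
    (hu.mono (hsub.trans (uIcc_of_le hab).subset)) (fun z hz ↦ ?_) (hk.mono_set hsub)]
  rw [uIcc_of_le hab] at hx hy
  have hzab : z ∈ Ioo a b := ⟨(le_min hx.1 hy.1).trans_lt hz.1, hz.2.trans_le (max_le hx.2 hy.2)⟩
  exact (hderiv z hzab).hasDerivWithinAt

theorem integral_eq_sub_of_ae_hasDerivAt (hab : a ≤ b) (hu : AbsolutelyContinuousOnInterval u a b)
    (hk : IntervalIntegrable k volume a b) (hderiv : ∀ᵐ x, x ∈ Ioo a b → HasDerivAt u (k x) x) :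
    ∫ x in a..b, k x = u b - u a := by
  have hprim : IsPrimitiveOn (fun x ↦ ∫ t in a..x, k t) k a b :=
    ⟨hk, fun x hx y hy ↦ intervalIntegral.integral_interval_sub_left
      (hk.mono_set (uIcc_subset_uIcc left_mem_uIcc hy))
      (hk.mono_set (uIcc_subset_uIcc left_mem_uIcc hx))⟩
  obtain ⟨C, hC⟩ := (hu.sub hprim.absolutelyContinuousOnInterval).const_of_ae_hasDerivAt_zero <| by
    have ha : ∀ᵐ x : ℝ, x ≠ a := Measure.ae_ne volume a
    have hb : ∀ᵐ x : ℝ, x ≠ b := Measure.ae_ne volume b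
    filter_upwards [hderiv, hprim.ae_hasDerivAt, ha, hb] with x hux hkx hxa hxb hx
    rw [uIcc_of_le hab] at hx
    have hxab : x ∈ Ioo a b := ⟨hx.1.lt_of_ne' hxa, hx.2.lt_of_ne hxb⟩
    simpa only [sub_self] using (hux hxab).sub (hkx hxab)
  have hCab := (hC a left_mem_uIcc).trans (hC b right_mem_uIcc).symm
  simp only [Pi.sub_apply, intervalIntegral.integral_same, sub_zero] at hCab
  rw [hCab, sub_sub_cancel]

end Primitive

section Poincare

variable {E : Type*} [NormedAddCommGroup E] [NormedSpace ℝ E] {u k : ℝ → E} {a b : ℝ}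

theorem sq_integral_le_mul_integral_sq {f : ℝ → ℝ} (hab : a < b)
    (hf : IntervalIntegrable f volume a b) (hf2 : IntervalIntegrable (fun x ↦ f x ^ 2) volume a b) :
    (∫ x in a..b, f x) ^ 2 ≤ (b - a) * ∫ x in a..b, f x ^ 2 := by
  have hba : 0 < b - a := sub_pos.2 hab
  have hjensen := even_two.convexOn_pow.map_set_average_le (μ := volume) (t := Ι a b) (f := f)
    (continuous_pow 2).continuousOn isClosed_univ (by simp [uIoc_of_le hab.le, hab])
    (by simp [uIoc_of_le hab.le]) (by simp) hf.def' hf2.def'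
  rw [interval_average_eq] at hjensen
  rw [interval_average_eq, smul_eq_mul, smul_eq_mul, mul_pow] at hjensen
  calc (∫ x in a..b, f x) ^ 2
      = (b - a) ^ 2 * ((b - a)⁻¹ ^ 2 * (∫ x in a..b, f x) ^ 2) := by field_simp
    _ ≤ (b - a) ^ 2 * ((b - a)⁻¹ * ∫ x in a..b, f x ^ 2) := by gcongr
    _ = (b - a) * ∫ x in a..b, f x ^ 2 := by field_simp

theorem IsPrimitiveOn.integral_norm_sq_le_of_norm_le (hu : IsPrimitiveOn u k a b) (hab : a < b)
    (hk2 : IntervalIntegrable (fun x ↦ ‖k x‖ ^ 2) volume a b) {C : ℝ}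
    (hC : ∀ x ∈ Icc a b, ‖u x‖ ≤ C * ∫ t in a..b, ‖k t‖) :
    ∫ x in a..b, ‖u x‖ ^ 2 ≤ (C * (b - a)) ^ 2 * ∫ x in a..b, ‖k x‖ ^ 2 := by
  have : 0 < b - a := sub_pos.2 hab
  calc ∫ x in a..b, ‖u x‖ ^ 2
      ≤ ∫ _ in a..b, (C * ∫ t in a..b, ‖k t‖) ^ 2 :=
        intervalIntegral.integral_mono_on hab.le (hu.continuousOn.norm.pow 2).intervalIntegrable
          intervalIntegrable_const fun x hx ↦ pow_le_pow_left₀ (norm_nonneg _) (hC x hx) 2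
    _ = C ^ 2 * (b - a) * (∫ t in a..b, ‖k t‖) ^ 2 := by
        rw [intervalIntegral.integral_const, smul_eq_mul]; ring
    _ ≤ C ^ 2 * (b - a) * ((b - a) * ∫ x in a..b, ‖k x‖ ^ 2) := by
        gcongr
        exact sq_integral_le_mul_integral_sq hab hu.intervalIntegrable.norm hk2
    _ = (C * (b - a)) ^ 2 * ∫ x in a..b, ‖k x‖ ^ 2 := by ring

theorem IsPrimitiveOn.norm_sub_le_integral_norm (hu : IsPrimitiveOn u k a b) {x y : ℝ}
    (hx : x ∈ Icc a b) (hy : y ∈ Icc a b) : ‖u x - u y‖ ≤ ∫ t in a..b, ‖k t‖ := by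
  wlog hxy : y ≤ x generalizing x y
  · rw [norm_sub_rev]
    exact this hy hx (le_of_not_ge hxy)
  rw [hu.sub_eq_integral y (Icc_subset_uIcc hy) x (Icc_subset_uIcc hx)]
  exact (intervalIntegral.norm_integral_le_integral_norm hxy).trans
    (intervalIntegral.integral_mono_interval hy.1 hxy hx.2
      (.of_forall fun _ ↦ norm_nonneg _) hu.intervalIntegrable.norm)

theorem IsPrimitiveOn.norm_le_of_integral_eq_zero [CompleteSpace E] (hu : IsPrimitiveOn u k a b)
    (hab : a < b) (hmean : ∫ x in a..b, u x = 0) {x : ℝ} (hx : x ∈ Icc a b) :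
    ‖u x‖ ≤ ∫ t in a..b, ‖k t‖ := by
  have hba : 0 < b - a := sub_pos.2 hab
  have hux : ∫ y in a..b, (u x - u y) = (b - a) • u x := by
    rw [intervalIntegral.integral_sub intervalIntegrable_const hu.continuousOn.intervalIntegrable,
      intervalIntegral.integral_const, hmean, sub_zero]
  have hle := intervalIntegral.norm_integral_le_of_norm_le_const fun y hy ↦
    hu.norm_sub_le_integral_norm hx (Ioc_subset_Icc_self (uIoc_of_le hab.le ▸ hy))
  rw [hux, norm_smul, Real.norm_eq_abs, abs_of_pos hba, mul_comm] at hle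
  exact le_of_mul_le_mul_right hle hba

theorem IsPrimitiveOn.norm_le_half_of_eq_zero (hu : IsPrimitiveOn u k a b) (ha : u a = 0)
    (hb : u b = 0) {x : ℝ} (hx : x ∈ Icc a b) : ‖u x‖ ≤ 1 / 2 * ∫ t in a..b, ‖k t‖ := by
  have hxu : x ∈ [[a, b]] := Icc_subset_uIcc hx
  have hk := hu.intervalIntegrable.norm
  have hax : ‖u x‖ ≤ ∫ t in a..x, ‖k t‖ := by
    simpa [ha, ← hu.sub_eq_integral a left_mem_uIcc x hxu] using
      intervalIntegral.norm_integral_le_integral_norm (f := k) (μ := volume) hx.1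
  have hxb : ‖u x‖ ≤ ∫ t in x..b, ‖k t‖ := by
    simpa [hb, ← hu.sub_eq_integral x hxu b right_mem_uIcc] using
      intervalIntegral.norm_integral_le_integral_norm (f := k) (μ := volume) hx.2
  have hsplit := intervalIntegral.integral_add_adjacent_intervals
    (hk.mono_set (uIcc_subset_uIcc left_mem_uIcc hxu))
    (hk.mono_set (uIcc_subset_uIcc hxu right_mem_uIcc))
  linarith

theorem IsPrimitiveOn.integral_norm_sq_le_of_integral_eq_zero [CompleteSpace E]
    (hu : IsPrimitiveOn u k a b) (hab : a < b)
    (hk2 : IntervalIntegrable (fun x ↦ ‖k x‖ ^ 2) volume a b) (hmean : ∫ x in a..b, u x = 0) :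
    ∫ x in a..b, ‖u x‖ ^ 2 ≤ (b - a) ^ 2 * ∫ x in a..b, ‖k x‖ ^ 2 := by
  simpa only [one_mul] using hu.integral_norm_sq_le_of_norm_le hab hk2 (C := 1) fun x hx ↦
    (hu.norm_le_of_integral_eq_zero hab hmean hx).trans_eq (one_mul _).symm

theorem IsPrimitiveOn.integral_norm_sq_le_of_eq_zero (hu : IsPrimitiveOn u k a b) (hab : a < b)
    (hk2 : IntervalIntegrable (fun x ↦ ‖k x‖ ^ 2) volume a b) (ha : u a = 0) (hb : u b = 0) :
    ∫ x in a..b, ‖u x‖ ^ 2 ≤ ((b - a) / 2) ^ 2 * ∫ x in a..b, ‖k x‖ ^ 2 := by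
  simpa only [one_div_mul_eq_div] using hu.integral_norm_sq_le_of_norm_le hab hk2 fun x hx ↦
    hu.norm_le_half_of_eq_zero ha hb hx

end Poincare

theorem tendsto_integral_left_nhdsGT {E : Type*} [NormedAddCommGroup E] [NormedSpace ℝ E]
    {f : ℝ → E} {a b : ℝ} (hab : a < b) (hf : IntervalIntegrable f volume a b) :
    Tendsto (fun s ↦ ∫ x in s..b, f x) (𝓝[>] a) (𝓝 (∫ x in a..b, f x)) := by
  have hcont : ContinuousOn (fun s ↦ ∫ x in s..b, f x) [[a, b]] :=
    intervalIntegral.continuousOn_primitive_interval_left <|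
      uIcc_of_le hab.le ▸ (intervalIntegrable_iff_integrableOn_Icc_of_le hab.le).1 hf
  refine (hcont a left_mem_uIcc).tendsto.mono_left ?_
  rw [uIcc_of_le hab.le, ← nhdsWithin_Ioo_eq_nhdsGT hab]
  exact nhdsWithin_mono _ Ioo_subset_Icc_self

theorem eq_zero_of_tendsto_of_integrableOn_inv_smul {E : Type*} [NormedAddCommGroup E]
    [NormedSpace ℝ E] {l : Filter ℝ} [l.NeBot] [TendstoIxxClass Icc l l] (hl : Ioi 0 ∈ l)
    (hlog : Tendsto (fun x ↦ |Real.log x|) l atTop) {φ : ℝ → E} {L : E} (hφ : Tendsto φ l (𝓝 L))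
    (hint : IntegrableOn (fun x ↦ x⁻¹ • φ x) (Ioi 0)) : L = 0 := by
  by_contra hL
  refine not_integrableOn_of_tendsto_norm_atTop_of_deriv_isBigO_filter (f := Real.log) l hl
    (mem_of_superset hl fun x hx ↦ Real.differentiableAt_log (ne_of_gt hx)) hlog ?_ hint
  have hone : (fun _ : ℝ ↦ (1 : ℝ)) =O[l] φ :=
    (Asymptotics.isBigO_const_left_iff_pos_le_norm one_ne_zero).2 ⟨‖L‖ / 2, by positivity,
      (hφ.norm.eventually_const_lt (half_lt_self (norm_pos_iff.2 hL))).mono fun _ ↦ le_of_lt⟩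
  simpa [Real.deriv_log'] using (Asymptotics.isBigO_refl (fun x : ℝ ↦ x⁻¹) l).smul hone

namespace Lambda0

variable (F S : Lambda0) {s t x : ℝ}

theorem continuousOn_f : ContinuousOn F.f (Ioi 0) :=
  fun x hx ↦ (F.hasDeriv x hx).continuousAt.continuousWithinAt

theorem isPrimitiveOn_f (hs : 0 < s) (hst : s ≤ t) : IsPrimitiveOn F.f F.f' s t := by
  have hsub : Icc s t ⊆ Ioi 0 := fun _ hx ↦ hs.trans_le hx.1
  exact isPrimitiveOn_of_hasDerivAt hst (F.continuousOn_f.mono hsub)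
    (fun x hx ↦ F.hasDeriv x (hsub (Ioo_subset_Icc_self hx)))
    ((F.contDeriv.mono hsub).intervalIntegrable_of_Icc hst)

theorem isPrimitiveOn_f' (hs : 0 < s) (hst : s ≤ t) : IsPrimitiveOn F.f' F.f'' s t := by
  obtain ⟨hint, hf'⟩ := F.locAC s t hs hst
  have hint : IntervalIntegrable F.f'' volume s t :=
    (intervalIntegrable_iff_integrableOn_Icc_of_le hst).2 hint
  refine ⟨hint, fun x hx y hy ↦ ?_⟩
  rw [← intervalIntegral.integral_interval_sub_left
    (hint.mono_set (uIcc_subset_uIcc left_mem_uIcc hy))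
    (hint.mono_set (uIcc_subset_uIcc left_mem_uIcc hx)),
    hf' x (uIcc_of_le hst ▸ hx), hf' y (uIcc_of_le hst ▸ hy), add_sub_add_left_eq_sub]

theorem ae_hasDerivAt_f' : ∀ᵐ x ∂volume.restrict (Ioi 0), HasDerivAt F.f' (F.f'' x) x := by
  refine ae_restrict_of_ae_restrict_inter_Ioo fun s t hs _ hst ↦ ?_
  rw [ae_restrict_iff' (measurableSet_Ioi.inter measurableSet_Ioo)]
  filter_upwards [(F.isPrimitiveOn_f' hs hst.le).ae_hasDerivAt] with x hx hxst using hx hxst.2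

theorem aestronglyMeasurable_f' : AEStronglyMeasurable F.f' (volume.restrict (Ioi 0)) :=
  F.contDeriv.aestronglyMeasurable measurableSet_Ioi

theorem aestronglyMeasurable_f'' : AEStronglyMeasurable F.f'' (volume.restrict (Ioi 0)) :=
  (aestronglyMeasurable_deriv F.f' _).congr <| F.ae_hasDerivAt_f'.mono fun _ hx ↦ hx.deriv

/-- The integrand of `‖F‖₀²`. -/
def energyDensity (x : ℝ) : ℝ := x * ‖F.f'' x‖ ^ 2 + (1 / x) * ‖F.f' x‖ ^ 2

variable {F} in
theorem energyDensity_nonneg (hx : 0 < x) : 0 ≤ F.energyDensity x := by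
  unfold energyDensity
  positivity

theorem integrableOn_energyDensity : IntegrableOn F.energyDensity (Ioi 0) := F.energyFin

theorem seminorm0_nonneg : 0 ≤ F.seminorm0 := Real.sqrt_nonneg _

theorem sq_seminorm0 : F.seminorm0 ^ 2 = ∫ x in Ioi 0, F.energyDensity x :=
  Real.sq_sqrt <| setIntegral_nonneg measurableSet_Ioi fun _ hx ↦ energyDensity_nonneg hx

theorem integrableOn_energy_sub : IntegrableOn (fun x ↦
    x * ‖F.f'' x - S.f'' x‖ ^ 2 + 1 / x * ‖F.f' x - S.f' x‖ ^ 2) (Ioi 0) := by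
  refine ((F.integrableOn_energyDensity.add S.integrableOn_energyDensity).const_mul 2).mono' ?_ ?_
  · have hinv : Measurable fun x : ℝ ↦ 1 / x := by fun_prop
    exact (aestronglyMeasurable_id.mul
      ((F.aestronglyMeasurable_f''.sub S.aestronglyMeasurable_f'').norm.pow 2)).add
      (hinv.aestronglyMeasurable.mul
        ((F.aestronglyMeasurable_f'.sub S.aestronglyMeasurable_f').norm.pow 2))
  · filter_upwards [ae_restrict_mem measurableSet_Ioi] with x (hx : 0 < x)
    have hsq (z w : ℂ) : ‖z - w‖ ^ 2 ≤ 2 * (‖z‖ ^ 2 + ‖w‖ ^ 2) :=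
      (pow_le_pow_left₀ (norm_nonneg _) (norm_sub_le z w) 2).trans add_sq_le
    rw [Real.norm_of_nonneg (by positivity)]
    calc x * ‖F.f'' x - S.f'' x‖ ^ 2 + 1 / x * ‖F.f' x - S.f' x‖ ^ 2
        ≤ x * (2 * (‖F.f'' x‖ ^ 2 + ‖S.f'' x‖ ^ 2))
          + 1 / x * (2 * (‖F.f' x‖ ^ 2 + ‖S.f' x‖ ^ 2)) := by
          gcongr <;> exact hsq _ _
      _ = 2 * (F.energyDensity x + S.energyDensity x) := by unfold energyDensity; ring

instance : Sub Lambda0 where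
  sub F S :=
    { f := F.f - S.f
      f' := F.f' - S.f'
      f'' := F.f'' - S.f''
      hasDeriv := fun x hx ↦ (F.hasDeriv x hx).sub (S.hasDeriv x hx)
      contDeriv := F.contDeriv.sub S.contDeriv
      locAC := by
        intro s t hs hst
        refine ⟨(F.locAC s t hs hst).1.sub (S.locAC s t hs hst).1, fun x hx ↦ ?_⟩
        have hF := (F.isPrimitiveOn_f' hs hx.1).intervalIntegrable
        have hS := (S.isPrimitiveOn_f' hs hx.1).intervalIntegrable
        simp only [Pi.sub_apply, intervalIntegral.integral_sub hF hS,
          (F.locAC s t hs hst).2 x hx, (S.locAC s t hs hst).2 x hx]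
        ring
      energyFin := F.integrableOn_energy_sub S }

@[simp] theorem sub_f' : (F - S).f' = F.f' - S.f' := rfl

@[simp] theorem sub_f'' : (F - S).f'' = F.f'' - S.f'' := rfl

variable {F} in
theorem mul_sq_norm_f''_le_energyDensity (hs : 0 < s) (hsx : s ≤ x) :
    s * ‖F.f'' x‖ ^ 2 ≤ F.energyDensity x := by
  have hx : 0 < x := hs.trans_le hsx
  calc s * ‖F.f'' x‖ ^ 2 ≤ x * ‖F.f'' x‖ ^ 2 := by gcongr
    _ ≤ F.energyDensity x := le_add_of_nonneg_right (by positivity)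

theorem intervalIntegrable_sq_norm_f'' (hs : 0 < s) (hst : s ≤ t) :
    IntervalIntegrable (fun x ↦ ‖F.f'' x‖ ^ 2) volume s t := by
  have hsub : Ioc s t ⊆ Ioi 0 := fun _ hx ↦ hs.trans hx.1
  rw [intervalIntegrable_iff_integrableOn_Ioc_of_le hst]
  refine ((F.integrableOn_energyDensity.mono_set hsub).const_mul s⁻¹).mono'
    ((F.aestronglyMeasurable_f''.mono_set hsub).norm.pow 2) ?_
  filter_upwards [ae_restrict_mem measurableSet_Ioc] with x hx
  rw [Real.norm_of_nonneg (by positivity), le_inv_mul_iff₀ hs]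
  exact mul_sq_norm_f''_le_energyDensity hs hx.1.le

theorem integral_sq_norm_f''_le (hs : 0 < s) (hst : s ≤ t) :
    ∫ x in s..t, ‖F.f'' x‖ ^ 2 ≤ F.seminorm0 ^ 2 / s := by
  have hsub : Ioc s t ⊆ Ioi 0 := fun _ hx ↦ hs.trans hx.1
  rw [le_div_iff₀' hs, ← intervalIntegral.integral_const_mul, intervalIntegral.integral_of_le hst,
    sq_seminorm0]
  calc ∫ x in Ioc s t, s * ‖F.f'' x‖ ^ 2
      ≤ ∫ x in Ioc s t, F.energyDensity x :=
        setIntegral_mono_on ((F.intervalIntegrable_sq_norm_f'' hs hst).1.const_mul s)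
          (F.integrableOn_energyDensity.mono_set hsub) measurableSet_Ioc
          fun x hx ↦ mul_sq_norm_f''_le_energyDensity hs hx.1.le
    _ ≤ ∫ x in Ioi 0, F.energyDensity x :=
        setIntegral_mono_set F.integrableOn_energyDensity
          ((ae_restrict_mem measurableSet_Ioi).mono fun _ hx ↦ energyDensity_nonneg hx)
          hsub.eventuallyLE

end Lambda0

section InnerProduct

variable (F G S : Lambda0) {x : ℝ}

/-- The integrand of `⟨G, S⟩₀`. -/
def innerBLDensity (x : ℝ) : ℂ := x * G.f'' x * conj (S.f'' x) + 1 / x * G.f' x * conj (S.f' x)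

variable {G S} in
theorem norm_innerBLDensity_le (hx : 0 < x) :
    ‖innerBLDensity G S x‖ ≤ G.energyDensity x + S.energyDensity x := by
  have hmul (p q : ℝ) : p * q ≤ p ^ 2 + q ^ 2 := by nlinarith [sq_nonneg (p + q), sq_nonneg (p - q)]
  calc ‖innerBLDensity G S x‖
      ≤ x * (‖G.f'' x‖ * ‖S.f'' x‖) + 1 / x * (‖G.f' x‖ * ‖S.f' x‖) := by
        refine (norm_add_le _ _).trans_eq ?_
        simp only [norm_mul, norm_div, norm_one, Complex.norm_of_nonneg hx.le, RCLike.norm_conj,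
          mul_assoc]
    _ ≤ x * (‖G.f'' x‖ ^ 2 + ‖S.f'' x‖ ^ 2) + 1 / x * (‖G.f' x‖ ^ 2 + ‖S.f' x‖ ^ 2) := by
        gcongr <;> exact hmul _ _
    _ = G.energyDensity x + S.energyDensity x := by unfold Lambda0.energyDensity; ring

theorem integrableOn_innerBLDensity : IntegrableOn (innerBLDensity G S) (Ioi 0) := by
  refine (G.integrableOn_energyDensity.add S.integrableOn_energyDensity).mono' ?_ ?_
  · have hid : Measurable fun x : ℝ ↦ (x : ℂ) := by fun_prop
    have hinv : Measurable fun x : ℝ ↦ 1 / (x : ℂ) := by fun_prop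
    exact ((hid.aestronglyMeasurable.mul G.aestronglyMeasurable_f'').mul
        (Complex.continuous_conj.comp_aestronglyMeasurable S.aestronglyMeasurable_f'')).add
      ((hinv.aestronglyMeasurable.mul G.aestronglyMeasurable_f').mul
        (Complex.continuous_conj.comp_aestronglyMeasurable S.aestronglyMeasurable_f'))
  · filter_upwards [ae_restrict_mem measurableSet_Ioi] with x hx using norm_innerBLDensity_le hx

variable {G S} in
theorem intervalIntegrable_innerBLDensity {s t : ℝ} (hs : 0 ≤ s) (hst : s ≤ t) :
    IntervalIntegrable (innerBLDensity G S) volume s t :=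
  (intervalIntegrable_iff_integrableOn_Ioc_of_le hst).2 <|
    (integrableOn_innerBLDensity G S).mono_set fun _ hx ↦ hs.trans_lt hx.1

theorem energyDensity_eq_add : F.energyDensity x =
    (F - S).energyDensity x + S.energyDensity x + 2 * (innerBLDensity (F - S) S x).re := by
  have hsq (z w : ℂ) : ‖z‖ ^ 2 = ‖z - w‖ ^ 2 + ‖w‖ ^ 2 + 2 * ((z - w) * conj w).re := by
    simpa only [Complex.normSq_eq_norm_sq, sub_add_cancel] using Complex.normSq_add (z - w) w
  have hre (y : ℝ) (z w : ℂ) : (y * z * w).re = y * (z * w).re := by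
    rw [mul_assoc, Complex.re_ofReal_mul]
  simp only [Lambda0.energyDensity, innerBLDensity, Lambda0.sub_f', Lambda0.sub_f'', Pi.sub_apply,
    ← Complex.ofReal_one, ← Complex.ofReal_div, Complex.add_re, hre]
  rw [hsq (F.f'' x) (S.f'' x), hsq (F.f' x) (S.f' x)]
  ring

theorem sq_seminorm0_eq_add :
    F.seminorm0 ^ 2 = (F - S).seminorm0 ^ 2 + S.seminorm0 ^ 2 + 2 * (innerBL (F - S) S).re := by
  have hFS := (F - S).integrableOn_energyDensity
  have hS := S.integrableOn_energyDensity
  have hI := integrableOn_innerBLDensity (F - S) S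
  have hre : (innerBL (F - S) S).re = ∫ x in Ioi 0, (innerBLDensity (F - S) S x).re :=
    (integral_re hI).symm
  have hsum : IntegrableOn (fun x ↦ (F - S).energyDensity x + S.energyDensity x) (Ioi 0) :=
    hFS.add hS
  have htwo : IntegrableOn (fun x ↦ 2 * (innerBLDensity (F - S) S x).re) (Ioi 0) :=
    hI.re.const_mul 2
  rw [hre, Lambda0.sq_seminorm0, Lambda0.sq_seminorm0, Lambda0.sq_seminorm0, ← integral_add hFS hS,
    ← integral_const_mul, ← integral_add hsum htwo]
  exact integral_congr_ae <| .of_forall fun x ↦ energyDensity_eq_add F S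

variable {F S} in
theorem seminorm0_sub_le_of_innerBL_eq_zero (horth : innerBL (F - S) S = 0) :
    (F - S).seminorm0 ≤ F.seminorm0 := by
  have hpyth := sq_seminorm0_eq_add F S
  rw [horth, Complex.zero_re, mul_zero, add_zero] at hpyth
  refine (sq_le_sq₀ (F - S).seminorm0_nonneg F.seminorm0_nonneg).1 ?_
  exact hpyth ▸ le_add_of_nonneg_right (sq_nonneg _)

end InnerProduct

section FirstIntegral

theorem hasDerivAt_ofReal_log {x : ℝ} (hx : 0 < x) :
    HasDerivAt (fun y : ℝ ↦ (Real.log y : ℂ)) (x : ℂ)⁻¹ x := by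
  simpa only [Complex.ofReal_inv] using (Real.hasDerivAt_log hx.ne').ofReal_comp

theorem hasDerivAt_kerL0 (a b c d : ℂ) {x : ℝ} (hx : 0 < x) :
    HasDerivAt (fun y : ℝ ↦ a * (y : ℂ) ^ 2 + b * (y : ℂ) ^ 2 * Real.log y + c + d * Real.log y)
      (2 * a * x + b * (2 * x * Real.log x + x) + d / x) x := by
  have hx' : (x : ℂ) ≠ 0 := Complex.ofReal_ne_zero.2 hx.ne'
  have hlog := hasDerivAt_ofReal_log hx
  have hsq : HasDerivAt (fun y : ℝ ↦ (y : ℂ) ^ 2) (2 * x) x := by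
    simpa using (hasDerivAt_id x).ofReal_comp.fun_pow 2
  convert! (((hsq.const_mul a).add ((hsq.const_mul b).mul hlog)).add_const c).add
    (hlog.const_mul d) using 1
  field_simp

theorem hasDerivAt_deriv_kerL0 (a b d : ℂ) {x : ℝ} (hx : 0 < x) :
    HasDerivAt (fun y : ℝ ↦ 2 * a * (y : ℂ) + b * (2 * y * Real.log y + y) + d / y)
      (2 * a + b * (2 * Real.log x + 3) - d / (x : ℂ) ^ 2) x := by
  have hx' : (x : ℂ) ≠ 0 := Complex.ofReal_ne_zero.2 hx.ne'
  have hid : HasDerivAt (fun y : ℝ ↦ (y : ℂ)) 1 x := by simpa using (hasDerivAt_id x).ofReal_comp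
  convert! ((hid.const_mul (2 * a)).add ((((hid.const_mul 2).mul (hasDerivAt_ofReal_log hx)).add
    hid).const_mul b)).add ((hasDerivAt_const x d).div hid hx') using 1
  field_simp
  ring

theorem hasDerivAt_mul_deriv_deriv_kerL0 (a b d : ℂ) {x : ℝ} (hx : 0 < x) :
    HasDerivAt (fun y : ℝ ↦ (y : ℂ) * (2 * a + b * (2 * Real.log y + 3) - d / (y : ℂ) ^ 2))
      ((2 * a * x + b * (2 * x * Real.log x + x) + d / x) / x + 4 * b) x := by
  have hx' : (x : ℂ) ≠ 0 := Complex.ofReal_ne_zero.2 hx.ne'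
  have hid : HasDerivAt (fun y : ℝ ↦ (y : ℂ)) 1 x := by simpa using (hasDerivAt_id x).ofReal_comp
  convert! hid.mul ((((((hasDerivAt_ofReal_log hx).const_mul 2).add_const 3).const_mul b).const_add
    (2 * a)).sub ((hasDerivAt_const x d).div (hid.pow 2) (pow_ne_zero 2 hx'))) using 1
  simp only [Pi.pow_apply, Pi.sub_apply, Pi.div_apply]
  field_simp
  ring

/-- The integrated form `(x η″)′ = η′ / x + β` of the equation `L₀ η = 0` for `η = S.f` on `U`.
The second derivative is `deriv S.f'`, as `S.f''` is determined only almost everywhere. -/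
def HasFirstIntegral (S : Lambda0) (β : ℂ) (U : Set ℝ) : Prop :=
  ∀ x ∈ U, HasDerivAt (fun y : ℝ ↦ (y : ℂ) * deriv S.f' y) (S.f' x / x + β) x

theorem hasFirstIntegral_of_forall_eq {S : Lambda0} {a b c d : ℂ} {U : Set ℝ} (hU : IsOpen U)
    (hpos : U ⊆ Ioi 0) (hS : ∀ x ∈ U, S.f x =
      a * (x : ℂ) ^ 2 + b * (x : ℂ) ^ 2 * (Real.log x : ℂ) + c + d * (Real.log x : ℂ)) :
    HasFirstIntegral S (4 * b) U := by
  have hS' : ∀ x ∈ U, S.f' x = 2 * a * x + b * (2 * x * Real.log x + x) + d / x := fun x hx ↦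
    (S.hasDeriv x (hpos hx)).unique <| (hasDerivAt_kerL0 a b c d (hpos hx)).congr_of_eventuallyEq <|
      eventuallyEq_of_mem (hU.mem_nhds hx) hS
  have hS'' : ∀ x ∈ U, deriv S.f' x = 2 * a + b * (2 * Real.log x + 3) - d / (x : ℂ) ^ 2 :=
    fun x hx ↦ ((hasDerivAt_deriv_kerL0 a b d (hpos hx)).congr_of_eventuallyEq <|
      eventuallyEq_of_mem (hU.mem_nhds hx) hS').deriv
  intro x hx
  rw [hS' x hx]
  refine (hasDerivAt_mul_deriv_deriv_kerL0 a b d (hpos hx)).congr_of_eventuallyEq ?_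
  filter_upwards [hU.mem_nhds hx] with y hy
  rw [hS'' y hy]

end FirstIntegral

section BoundaryTerm

variable {G S : Lambda0} {β : ℂ} {s t : ℝ}

/-- The boundary term `x · conj S″(x) · G′(x)` produced by integrating `⟨G, S⟩₀` by parts, with the
pointwise second derivative `deriv S.f'` in place of the almost everywhere defined `S.f''`. -/
def boundaryTerm (G S : Lambda0) (x : ℝ) : ℂ := conj (x * deriv S.f' x) * G.f' x

theorem integral_innerBLDensity_of_hasFirstIntegral (hs : 0 < s) (hst : s ≤ t)
    (hcont : ContinuousOn (deriv S.f') (Ioi 0)) (hβ : HasFirstIntegral S β (Ioo s t)) :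
    ∫ x in s..t, innerBLDensity G S x =
      boundaryTerm G S t - boundaryTerm G S s - conj β * (G.f t - G.f s) := by
  have hsub : Icc s t ⊆ Ioi 0 := fun _ hx ↦ hs.trans_le hx.1
  have hid : ContinuousOn (fun x : ℝ ↦ (x : ℂ)) (Icc s t) := Complex.continuous_ofReal.continuousOn
  have hW : IsPrimitiveOn (fun x : ℝ ↦ (x : ℂ) * deriv S.f' x) (fun x ↦ S.f' x / x + β) s t :=
    isPrimitiveOn_of_hasDerivAt hst (hid.mul (hcont.mono hsub)) hβ <|
      (((S.contDeriv.mono hsub).div hid fun x hx ↦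
        Complex.ofReal_ne_zero.2 (hsub hx).ne').add
        continuousOn_const).intervalIntegrable_of_Icc hst
  have hconjW : AbsolutelyContinuousOnInterval (fun x : ℝ ↦ conj (x * deriv S.f' x)) s t :=
    absolutelyContinuousOnInterval_of_dist_le hW.absolutelyContinuousOnInterval fun x _ y _ ↦
      (Complex.dist_conj_conj _ _).le
  have hG := (G.isPrimitiveOn_f hs hst).absolutelyContinuousOnInterval
  have hG' := (G.isPrimitiveOn_f' hs hst).absolutelyContinuousOnInterval
  rw [integral_eq_sub_of_ae_hasDerivAt hst ((hconjW.smul hG').sub (hG.const_smul (conj β)))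
    (intervalIntegrable_innerBLDensity hs.le hst)]
  · simp only [boundaryTerm, Pi.sub_apply, Pi.mul_apply, smul_eq_mul]
    ring
  filter_upwards [(ae_restrict_iff' measurableSet_Ioi).1 G.ae_hasDerivAt_f',
    (ae_restrict_iff' measurableSet_Ioi).1 S.ae_hasDerivAt_f'] with x hG'' hS'' hx
  have hx0 : 0 < x := hs.trans hx.1
  convert! ((hβ x hx).star.mul (hG'' hx0)).sub ((G.hasDeriv x hx0).const_mul (conj β)) using 1
  have hx' : (x : ℂ) ≠ 0 := Complex.ofReal_ne_zero.2 hx0.ne'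
  simp only [innerBLDensity, (hS'' hx0).deriv, RCLike.star_def, map_add, map_mul, map_div₀,
    Complex.conj_ofReal]
  field_simp
  ring

variable (G S) in
theorem integrableOn_inv_smul_boundaryTerm :
    IntegrableOn (fun x ↦ x⁻¹ • boundaryTerm G S x) (Ioi 0) := by
  have hprod : (fun x ↦ x⁻¹ • boundaryTerm G S x) =ᵐ[volume.restrict (Ioi 0)]
      fun x ↦ conj (S.f'' x) * G.f' x := by
    filter_upwards [ae_restrict_mem measurableSet_Ioi, S.ae_hasDerivAt_f'] with x (hx : 0 < x) hS''
    simp only [boundaryTerm, hS''.deriv, map_mul, Complex.conj_ofReal, Complex.real_smul,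
      Complex.ofReal_inv]
    field_simp [Complex.ofReal_ne_zero.2 hx.ne']
  refine (integrable_congr hprod).2 <|
    (S.integrableOn_energyDensity.add G.integrableOn_energyDensity).mono' ?_ ?_
  · exact (Complex.continuous_conj.comp_aestronglyMeasurable S.aestronglyMeasurable_f'').mul
      G.aestronglyMeasurable_f'
  · filter_upwards [ae_restrict_mem measurableSet_Ioi] with x (hx : 0 < x)
    have hmul (p q : ℝ) : p * q ≤ x * p ^ 2 + 1 / x * q ^ 2 := by
      have hsq : x * p ^ 2 + 1 / x * q ^ 2 - p * q = ((x * p - q / 2) ^ 2 + 3 / 4 * q ^ 2) / x := by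
        field_simp
        ring
      exact sub_nonneg.1 (hsq ▸ by positivity)
    calc ‖conj (S.f'' x) * G.f' x‖ = ‖S.f'' x‖ * ‖G.f' x‖ := by rw [norm_mul, RCLike.norm_conj]
      _ ≤ x * ‖S.f'' x‖ ^ 2 + 1 / x * ‖G.f' x‖ ^ 2 := hmul _ _
      _ ≤ S.energyDensity x + G.energyDensity x := by
        unfold Lambda0.energyDensity
        gcongr
        · exact le_add_of_nonneg_right (by positivity)
        · exact le_add_of_nonneg_left (by positivity)

theorem integral_zero_innerBLDensity (ht : 0 < t) (hcont : ContinuousOn (deriv S.f') (Ioi 0))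
    (hβ : HasFirstIntegral S β (Ioo 0 t))
    (hlim : Tendsto (fun s ↦ conj β * (G.f t - G.f s)) (𝓝[>] 0) (𝓝 0)) :
    ∫ x in 0..t, innerBLDensity G S x = boundaryTerm G S t := by
  have hI : IntervalIntegrable (innerBLDensity G S) volume 0 t :=
    intervalIntegrable_innerBLDensity le_rfl ht.le
  have hbdry : Tendsto (boundaryTerm G S) (𝓝[>] 0)
      (𝓝 (boundaryTerm G S t - 0 - ∫ x in 0..t, innerBLDensity G S x)) := by
    refine ((hlim.const_sub _).sub (tendsto_integral_left_nhdsGT ht hI)).congr' ?_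
    filter_upwards [Ioo_mem_nhdsGT ht] with s hs
    rw [integral_innerBLDensity_of_hasFirstIntegral hs.1 hs.2.le hcont fun x hx ↦
      hβ x (Ioo_subset_Ioo_left hs.1.le hx)]
    ring
  have hzero := eq_zero_of_tendsto_of_integrableOn_inv_smul self_mem_nhdsWithin
    (tendsto_abs_atBot_atTop.comp Real.tendsto_log_nhdsGT_zero) hbdry
    (integrableOn_inv_smul_boundaryTerm G S)
  rw [sub_zero, sub_eq_zero] at hzero
  exact hzero.symm

theorem integral_Ioi_innerBLDensity (hs : 0 < s) (hcont : ContinuousOn (deriv S.f') (Ioi 0))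
    (hβ : HasFirstIntegral S 0 (Ioi s)) :
    ∫ x in Ioi s, innerBLDensity G S x = -boundaryTerm G S s := by
  have hI := (integrableOn_innerBLDensity G S).mono_set (Ioi_subset_Ioi hs.le)
  have hbdry : Tendsto (boundaryTerm G S) atTop
      (𝓝 ((∫ x in Ioi s, innerBLDensity G S x) + boundaryTerm G S s)) := by
    refine ((intervalIntegral_tendsto_integral_Ioi s hI tendsto_id).add_const _).congr' ?_
    filter_upwards [Ioi_mem_atTop s] with t (ht : s < t)
    rw [id_eq, integral_innerBLDensity_of_hasFirstIntegral hs ht.le hcont fun x hx ↦ hβ x hx.1,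
      map_zero]
    ring
  exact eq_neg_of_add_eq_zero_left <| eq_zero_of_tendsto_of_integrableOn_inv_smul
    (Ioi_mem_atTop 0) (tendsto_abs_atTop_atTop.comp Real.tendsto_log_atTop) hbdry
    (integrableOn_inv_smul_boundaryTerm G S)

end BoundaryTerm

section Orthogonality

variable {F G S : Lambda0} {n : ℕ} {r : ℕ → ℝ}

theorem pos_and_lt_of_strictMonoOn (hpos : 0 < r 1) (hr : StrictMonoOn r (Icc 1 n)) {j : ℕ}
    (hj : j ∈ Ico 1 n) : 0 < r j ∧ r j < r (j + 1) :=
  ⟨hpos.trans_le (hr.monotoneOn ⟨le_rfl, hj.1.trans hj.2.le⟩ ⟨hj.1, hj.2.le⟩ hj.1),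
    hr ⟨hj.1, hj.2.le⟩ ⟨hj.1.trans j.le_succ, hj.2⟩ j.lt_succ_self⟩

namespace IsBLSpline

theorem continuousOn_deriv_f' (hS : IsBLSpline n r S.f) : ContinuousOn (deriv S.f') (Ioi 0) := by
  have hf' : ContDiffOn ℝ 1 S.f' (Ioi 0) :=
    ((contDiffOn_succ_iff_deriv_of_isOpen (n := 1) isOpen_Ioi).1
      (one_add_one_eq_two (R := WithTop ℕ∞) ▸ hS.smooth)).2.2.congr fun x hx ↦
        (S.hasDeriv x hx).deriv.symm
  exact hf'.continuousOn_deriv_of_isOpen isOpen_Ioi le_rfl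

theorem integral_innerBLDensity_knots (hS : IsBLSpline n r S.f) (hn : 1 ≤ n) (hpos : 0 < r 1)
    (hr : StrictMonoOn r (Icc 1 n)) (hG : ∀ j ∈ Icc 1 n, G.f (r j) = 0) :
    ∫ x in (r 1)..(r n), innerBLDensity G S x =
      boundaryTerm G S (r n) - boundaryTerm G S (r 1) := by
  have hknot := fun j hj ↦ pos_and_lt_of_strictMonoOn (j := j) hpos hr hj
  have hI : ∀ j ∈ Ico 1 n, IntervalIntegrable (innerBLDensity G S) volume (r j) (r (j + 1)) :=
    fun j hj ↦ intervalIntegrable_innerBLDensity (hknot j hj).1.le (hknot j hj).2.le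
  rw [← intervalIntegral.sum_integral_adjacent_intervals_Ico hn hI]
  refine (Finset.sum_congr rfl fun j hj ↦ ?_).trans
    (Finset.sum_Ico_sub (fun j ↦ boundaryTerm G S (r j)) hn)
  obtain ⟨h1j, hjn⟩ := Finset.mem_Ico.1 hj
  obtain ⟨hj0, hjj⟩ := hknot j ⟨h1j, hjn⟩
  obtain ⟨a, b, c, d, hpiece⟩ := hS.pieces j h1j hjn
  have hβ := hasFirstIntegral_of_forall_eq isOpen_Ioo (fun _ hx ↦ hj0.trans hx.1) hpiece
  rw [integral_innerBLDensity_of_hasFirstIntegral hj0 hjj.le hS.continuousOn_deriv_f' hβ,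
    hG j ⟨h1j, hjn.le⟩, hG (j + 1) ⟨h1j.trans j.le_succ, hjn⟩, sub_self, mul_zero, sub_zero]

theorem integral_zero_innerBLDensity (hS : IsBLSpline n r S.f) (hpos : 0 < r 1)
    (hG : G.f (r 1) = 0) (hAB : Tendsto G.f (𝓝[>] 0) (𝓝 0) ∨ NonSingularBLS (r 1) S.f) :
    ∫ x in 0..(r 1), innerBLDensity G S x = boundaryTerm G S (r 1) := by
  obtain ⟨β, hβ, hlim⟩ : ∃ β, HasFirstIntegral S β (Ioo 0 (r 1)) ∧
      Tendsto (fun s ↦ conj β * (G.f (r 1) - G.f s)) (𝓝[>] 0) (𝓝 0) := by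
    rcases hAB with hG0 | ⟨a, c, hS0⟩
    · obtain ⟨a, b, c, hS0⟩ := hS.left
      refine ⟨4 * b, hasFirstIntegral_of_forall_eq (a := a) (c := c) (d := 0) isOpen_Ioo
        Ioo_subset_Ioi_self fun x hx ↦ by rw [hS0 x hx]; ring, ?_⟩
      simpa [hG] using (hG0.const_sub (G.f (r 1))).const_mul (conj (4 * b))
    · exact ⟨4 * 0, hasFirstIntegral_of_forall_eq (a := a) (c := c) (d := 0) isOpen_Ioo
        Ioo_subset_Ioi_self fun x hx ↦ by rw [hS0 x hx]; ring, by simp⟩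
  exact _root_.integral_zero_innerBLDensity hpos hS.continuousOn_deriv_f' hβ hlim

theorem integral_Ioi_innerBLDensity (hS : IsBLSpline n r S.f) (hpos : 0 < r n) :
    ∫ x in Ioi (r n), innerBLDensity G S x = -boundaryTerm G S (r n) := by
  obtain ⟨c, d, hright⟩ := hS.right
  have hβ := hasFirstIntegral_of_forall_eq (S := S) (a := 0) (b := 0) (c := c) (d := d)
    isOpen_Ioi (Ioi_subset_Ioi hpos.le) fun x hx ↦ by rw [hright x hx]; ring
  exact _root_.integral_Ioi_innerBLDensity hpos hS.continuousOn_deriv_f' (mul_zero (4 : ℂ) ▸ hβ)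

theorem innerBL_eq_zero (hS : IsBLSpline n r S.f) (hn : 1 ≤ n) (hpos : 0 < r 1)
    (hr : StrictMonoOn r (Icc 1 n)) (hG : ∀ j ∈ Icc 1 n, G.f (r j) = 0)
    (hAB : Tendsto G.f (𝓝[>] 0) (𝓝 0) ∨ NonSingularBLS (r 1) S.f) : innerBL G S = 0 := by
  have hrn : r 1 ≤ r n := hr.monotoneOn ⟨le_rfl, hn⟩ ⟨hn, le_rfl⟩ hn
  have hI := integrableOn_innerBLDensity G S
  calc innerBL G S
      = (∫ x in 0..(r n), innerBLDensity G S x) + ∫ x in Ioi (r n), innerBLDensity G S x :=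
        (intervalIntegral.integral_interval_add_Ioi hI (hI.mono_set
          (Ioi_subset_Ioi (hpos.le.trans hrn)))).symm
    _ = (∫ x in 0..(r 1), innerBLDensity G S x) + (∫ x in (r 1)..(r n), innerBLDensity G S x)
          + ∫ x in Ioi (r n), innerBLDensity G S x := by
        rw [intervalIntegral.integral_add_adjacent_intervals
          (intervalIntegrable_innerBLDensity le_rfl hpos.le)
          (intervalIntegrable_innerBLDensity hpos.le hrn)]
    _ = 0 := by
        rw [hS.integral_zero_innerBLDensity hpos (hG 1 ⟨le_rfl, hn⟩) hAB,
          hS.integral_innerBLDensity_knots hn hpos hr hG,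
          hS.integral_Ioi_innerBLDensity (hpos.trans_le hrn)]
        ring

theorem seminorm0_sub_le (hS : IsBLSpline n r S.f) (hn : 1 ≤ n) (hpos : 0 < r 1)
    (hr : StrictMonoOn r (Icc 1 n)) (hint : ∀ j ∈ Icc 1 n, S.f (r j) = F.f (r j))
    (hAB : Tendsto F.f (𝓝[>] 0) (𝓝 (S.f 0)) ∨ NonSingularBLS (r 1) S.f) :
    (F - S).seminorm0 ≤ F.seminorm0 := by
  have hS0 : Tendsto S.f (𝓝[>] 0) (𝓝 (S.f 0)) :=
    hS.cont0.tendsto.mono_left (nhdsWithin_mono _ Ioi_subset_Ici_self)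
  refine seminorm0_sub_le_of_innerBL_eq_zero <| hS.innerBL_eq_zero hn hpos hr
    (fun j hj ↦ sub_eq_zero.2 (hint j hj).symm) (hAB.imp_left fun hF ↦ ?_)
  exact sub_self (S.f 0) ▸ hF.sub hS0

end IsBLSpline

end Orthogonality

section Knots

theorem integral_le_mul_integral_of_adjacent {m n : ℕ} (hmn : m ≤ n) {r : ℕ → ℝ} {u v : ℝ → ℝ}
    {K : ℝ} (hu : ∀ j ∈ Ico m n, IntervalIntegrable u volume (r j) (r (j + 1)))
    (hv : ∀ j ∈ Ico m n, IntervalIntegrable v volume (r j) (r (j + 1)))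
    (huv : ∀ j ∈ Ico m n, ∫ x in (r j)..(r (j + 1)), u x ≤ K * ∫ x in (r j)..(r (j + 1)), v x) :
    ∫ x in (r m)..(r n), u x ≤ K * ∫ x in (r m)..(r n), v x := by
  rw [← intervalIntegral.sum_integral_adjacent_intervals_Ico hmn hu,
    ← intervalIntegral.sum_integral_adjacent_intervals_Ico hmn hv, Finset.mul_sum]
  exact Finset.sum_le_sum fun j hj ↦ huv j (Finset.coe_Ico m n ▸ hj)

namespace Lambda0

variable {G : Lambda0} {s t h : ℝ}

theorem intervalIntegrable_sq_norm_f (hs : 0 < s) (hst : s ≤ t) :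
    IntervalIntegrable (fun x ↦ ‖G.f x‖ ^ 2) volume s t :=
  ((G.continuousOn_f.mono fun _ hx ↦ hs.trans_le hx.1).norm.pow 2).intervalIntegrable_of_Icc hst

theorem intervalIntegrable_sq_norm_f' (hs : 0 < s) (hst : s ≤ t) :
    IntervalIntegrable (fun x ↦ ‖G.f' x‖ ^ 2) volume s t :=
  ((G.contDeriv.mono fun _ hx ↦ hs.trans_le hx.1).norm.pow 2).intervalIntegrable_of_Icc hst

theorem integral_sq_norm_f'_le_of_eq (hs : 0 < s) (hst : s < t) (hG : G.f s = G.f t) :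
    ∫ x in s..t, ‖G.f' x‖ ^ 2 ≤ (t - s) ^ 2 * ∫ x in s..t, ‖G.f'' x‖ ^ 2 := by
  refine (G.isPrimitiveOn_f' hs hst.le).integral_norm_sq_le_of_integral_eq_zero hst
    (G.intervalIntegrable_sq_norm_f'' hs hst.le) ?_
  rw [← (G.isPrimitiveOn_f hs hst.le).sub_eq_integral s left_mem_uIcc t right_mem_uIcc, hG,
    sub_self]

theorem integral_sq_norm_f_le_of_eq_zero (hs : 0 < s) (hst : s < t) (hGs : G.f s = 0)
    (hGt : G.f t = 0) :
    ∫ x in s..t, ‖G.f x‖ ^ 2 ≤ ((t - s) / 2) ^ 2 * ∫ x in s..t, ‖G.f' x‖ ^ 2 :=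
  (G.isPrimitiveOn_f hs hst.le).integral_norm_sq_le_of_eq_zero hst
    (intervalIntegrable_sq_norm_f' hs hst.le) hGs hGt

variable {n : ℕ} {r : ℕ → ℝ}

theorem integral_sq_norm_f'_le_of_knots (hn : 1 ≤ n) (hpos : 0 < r 1)
    (hr : StrictMonoOn r (Icc 1 n)) (hh : ∀ j ∈ Ico 1 n, r (j + 1) - r j ≤ h)
    (hG : ∀ j ∈ Icc 1 n, G.f (r j) = 0) :
    ∫ x in (r 1)..(r n), ‖G.f' x‖ ^ 2 ≤ h ^ 2 * ∫ x in (r 1)..(r n), ‖G.f'' x‖ ^ 2 := by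
  have hknot := fun j hj ↦ pos_and_lt_of_strictMonoOn (j := j) hpos hr hj
  refine integral_le_mul_integral_of_adjacent hn
    (fun j hj ↦ intervalIntegrable_sq_norm_f' (hknot j hj).1 (hknot j hj).2.le)
    (fun j hj ↦ G.intervalIntegrable_sq_norm_f'' (hknot j hj).1 (hknot j hj).2.le) fun j hj ↦ ?_
  obtain ⟨hj0, hjj⟩ := hknot j hj
  have hGj : G.f (r j) = G.f (r (j + 1)) :=
    (hG j (Ico_subset_Icc_self hj)).trans (hG (j + 1) ⟨hj.1.trans j.le_succ, hj.2⟩).symm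
  refine (integral_sq_norm_f'_le_of_eq hj0 hjj hGj).trans ?_
  gcongr
  · exact intervalIntegral.integral_nonneg hjj.le fun _ _ ↦ by positivity
  · exact hh j hj

theorem integral_sq_norm_f_le_of_knots (hn : 1 ≤ n) (hpos : 0 < r 1) (hr : StrictMonoOn r (Icc 1 n))
    (hh : ∀ j ∈ Ico 1 n, r (j + 1) - r j ≤ h) (hG : ∀ j ∈ Icc 1 n, G.f (r j) = 0) :
    ∫ x in (r 1)..(r n), ‖G.f x‖ ^ 2 ≤ (h / 2) ^ 2 * ∫ x in (r 1)..(r n), ‖G.f' x‖ ^ 2 := by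
  have hknot := fun j hj ↦ pos_and_lt_of_strictMonoOn (j := j) hpos hr hj
  refine integral_le_mul_integral_of_adjacent hn
    (fun j hj ↦ intervalIntegrable_sq_norm_f (hknot j hj).1 (hknot j hj).2.le)
    (fun j hj ↦ intervalIntegrable_sq_norm_f' (hknot j hj).1 (hknot j hj).2.le) fun j hj ↦ ?_
  obtain ⟨hj0, hjj⟩ := hknot j hj
  refine (integral_sq_norm_f_le_of_eq_zero hj0 hjj (hG j (Ico_subset_Icc_self hj))
    (hG (j + 1) ⟨hj.1.trans j.le_succ, hj.2⟩)).trans ?_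
  gcongr
  · exact intervalIntegral.integral_nonneg hjj.le fun _ _ ↦ by positivity
  · exact hh j hj

end Lambda0

theorem sqrt_le_div_sqrt_mul {X c N ρ : ℝ} (hc : 0 ≤ c) (hN : 0 ≤ N)
    (hX : X ≤ c ^ 2 * (N ^ 2 / ρ)) : √X ≤ c / √ρ * N := by
  calc √X ≤ √(c ^ 2 * (N ^ 2 / ρ)) := Real.sqrt_le_sqrt hX
    _ = c * (N / √ρ) := by
      rw [Real.sqrt_mul (sq_nonneg c), Real.sqrt_div (sq_nonneg N), Real.sqrt_sq hc,
        Real.sqrt_sq hN]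
    _ = c / √ρ * N := by ring

end Knots

/-- `L²` error bound: for `l ∈ {0,1}`,
`‖f^{(l)} − σ^{(l)}‖_{L²[r₁,r_n]} ≤ (1/(2^{1−l}·√r₁))·h^{2−l}·‖f‖₀`. -/
theorem stmt12 (n : ℕ) (hn : 2 ≤ n) (r : ℕ → ℝ) (hpos : 0 < r 1)
    (hmono : ∀ j, 1 ≤ j → j < n → r j < r (j + 1))
    (h : ℝ) (hh : IsGreatest {d : ℝ | ∃ j, 1 ≤ j ∧ j < n ∧ d = r (j + 1) - r j} h)
    (F S : Lambda0) (hS : IsBLSpline n r S.f)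
    (hint : ∀ j, 1 ≤ j → j ≤ n → S.f (r j) = F.f (r j))
    (hAB : Filter.Tendsto F.f (nhdsWithin 0 (Set.Ioi 0)) (nhds (S.f 0)) ∨
      NonSingularBLS (r 1) S.f) :
    Real.sqrt (∫ x in Set.Icc (r 1) (r n), ‖F.f x - S.f x‖ ^ 2) ≤
        1 / (2 * Real.sqrt (r 1)) * h ^ 2 * F.seminorm0 ∧
    Real.sqrt (∫ x in Set.Icc (r 1) (r n), ‖F.f' x - S.f' x‖ ^ 2) ≤
        1 / Real.sqrt (r 1) * h * F.seminorm0 := by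
  have h1n : 1 ≤ n := one_le_two.trans hn
  have hr : StrictMonoOn r (Icc 1 n) :=
    strictMonoOn_of_lt_add_one ordConnected_Icc fun j _ hj hj' ↦ hmono j hj.1 hj'.2
  have hrn : r 1 ≤ r n := hr.monotoneOn ⟨le_rfl, h1n⟩ ⟨h1n, le_rfl⟩ h1n
  have hmesh : ∀ j ∈ Ico 1 n, r (j + 1) - r j ≤ h := fun j hj ↦ hh.2 ⟨j, hj.1, hj.2, rfl⟩
  have hh0 : 0 ≤ h := (sub_nonneg.2 (hmono 1 le_rfl hn).le).trans (hmesh 1 ⟨le_rfl, hn⟩)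
  have hG : ∀ j ∈ Icc 1 n, (F - S).f (r j) = 0 := fun j hj ↦ sub_eq_zero.2 (hint j hj.1 hj.2).symm
  have henergy : (F - S).seminorm0 ≤ F.seminorm0 :=
    hS.seminorm0_sub_le h1n hpos hr (fun j hj ↦ hint j hj.1 hj.2) hAB
  have hf'' : ∫ x in (r 1)..(r n), ‖(F - S).f'' x‖ ^ 2 ≤ F.seminorm0 ^ 2 / r 1 :=
    ((F - S).integral_sq_norm_f''_le hpos hrn).trans
      (by gcongr; exact (F - S).seminorm0_nonneg)
  have hf' : ∫ x in (r 1)..(r n), ‖(F - S).f' x‖ ^ 2 ≤ h ^ 2 * (F.seminorm0 ^ 2 / r 1) :=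
    (Lambda0.integral_sq_norm_f'_le_of_knots h1n hpos hr hmesh hG).trans (by gcongr)
  have hf : ∫ x in (r 1)..(r n), ‖(F - S).f x‖ ^ 2 ≤ (h ^ 2 / 2) ^ 2 * (F.seminorm0 ^ 2 / r 1) :=
    (Lambda0.integral_sq_norm_f_le_of_knots h1n hpos hr hmesh hG).trans <|
      (mul_le_mul_of_nonneg_left hf' (sq_nonneg _)).trans_eq (by ring)
  rw [intervalIntegral.integral_of_le hrn, ← integral_Icc_eq_integral_Ioc] at hf hf'
  exact ⟨(sqrt_le_div_sqrt_mul (by positivity) F.seminorm0_nonneg hf).trans_eq (by ring),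
    (sqrt_le_div_sqrt_mul hh0 F.seminorm0_nonneg hf').trans_eq (by ring)⟩
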